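/- Let M = P + εD ∈ 𝔻ℍ[t] be a bounded monic reduced motion polynomial of degree n ≥ 1 with P, D ∈ ℍ[t]. Set c := mrpf(P) and P = c·Q, and assume deg c > 0 and ν(M) = Nⁿ for some real irreducible quadratic N ∈ ℝ[t]. Let g := mrpf(c, Q*·D) and assume g divides mrpf(c, D·Q*) and c·g divides D·D*. Then there exist monic motion polynomials M_L, M_C, M_R ∈ 𝔻ℍ[t] with M = M_L·M_C·M_R, where M_L and M_R are generic, M_C = c + εD' for some D' ∈ ℍ[t], and M_C is a product of two generic motion polynomials. -/

import Mathlib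

open Polynomial DualNumber TrivSqZeroExt

noncomputable section

/-- The real quaternions. -/
abbrev Hq : Type := Quaternion ℝ

/-- The dual quaternions. -/
abbrev DHq : Type := DualNumber Hq

/-- Conjugation of a dual quaternion: `(p + ε d)* = p* + ε d*`. -/
instance : Star DHq := ⟨fun x => inl (star x.fst) + inr (star x.snd)⟩

/-- Coefficient-wise (quaternion) conjugation of a polynomial. -/
def cstar {R : Type*} [Semiring R] [Star R] (A : R[X]) : R[X] :=
  A.sum fun n a => Polynomial.C (star a) * Polynomial.X ^ n

/-- The embedding `ℝ[t] → ℍ[t]`. -/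
def qPoly (f : ℝ[X]) : Hq[X] := f.map (algebraMap ℝ Hq)

/-- The embedding `ℍ[t] → 𝔻ℍ[t]` (primal part). -/
def dhQ (P : Hq[X]) : DHq[X] := P.map (inlHom Hq Hq)

/-- The embedding `ℝ[t] → 𝔻ℍ[t]`. -/
def dPoly (f : ℝ[X]) : DHq[X] := dhQ (qPoly f)

/-- The dual quaternion polynomial `P + ε D` with primal part `P` and dual part `D`. -/
def mp (P D : Hq[X]) : DHq[X] := dhQ P + Polynomial.C ε * dhQ D

/-- The primal part of a dual quaternion polynomial. -/
def primal (A : DHq[X]) : Hq[X] := A.map (fstHom ℝ Hq Hq).toRingHom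

/-- A motion polynomial: a dual quaternion polynomial whose norm polynomial
`ν(M) = M·M*` is a nonzero real polynomial. -/
def IsMotion (M : DHq[X]) : Prop := ∃ f : ℝ[X], f ≠ 0 ∧ M * cstar M = dPoly f

/-- A real polynomial divides a quaternion polynomial. -/
def RDvdQ (f : ℝ[X]) (A : Hq[X]) : Prop := ∃ B : Hq[X], A = qPoly f * B

/-- A real polynomial divides a dual quaternion polynomial. -/
def RDvdD (f : ℝ[X]) (A : DHq[X]) : Prop := ∃ B : DHq[X], A = dPoly f * B

/-- `g` is the greatest common monic real polynomial divisor of a quaternion polynomial `A`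
(with itself), i.e. `g = mrpf A`. -/
def IsMrpfQ (g : ℝ[X]) (A : Hq[X]) : Prop :=
  g.Monic ∧ RDvdQ g A ∧ ∀ f : ℝ[X], f.Monic → RDvdQ f A → f ∣ g

/-- `g` is the greatest common monic real polynomial divisor of `c ∈ ℝ[t]` and a quaternion
polynomial `A`, i.e. `g = mrpf(c, A)`. -/
def IsMrpf2 (g : ℝ[X]) (c : ℝ[X]) (A : Hq[X]) : Prop :=
  g.Monic ∧ g ∣ c ∧ RDvdQ g A ∧
    ∀ f : ℝ[X], f.Monic → f ∣ c → RDvdQ f A → f ∣ g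

/-- `g` is the greatest common monic real polynomial divisor of `c ∈ ℝ[t]` and two quaternion
polynomials `A` and `B`, i.e. `g = mrpf(c, A, B)`. -/
def IsMrpf3 (g : ℝ[X]) (c : ℝ[X]) (A B : Hq[X]) : Prop :=
  g.Monic ∧ g ∣ c ∧ RDvdQ g A ∧ RDvdQ g B ∧
    ∀ f : ℝ[X], f.Monic → f ∣ c → RDvdQ f A → RDvdQ f B → f ∣ g

/-- A quaternion polynomial is reduced: `mrpf = 1`, i.e. it has only constant real
polynomial factors. -/
def ReducedQ (A : Hq[X]) : Prop := ∀ f : ℝ[X], f.Monic → RDvdQ f A → f = 1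

/-- A dual quaternion polynomial is reduced: `mrpf = 1`. -/
def ReducedD (A : DHq[X]) : Prop := ∀ f : ℝ[X], f.Monic → RDvdD f A → f = 1

/-- Boundedness of a (monic reduced) motion polynomial: `mrpf` of its primal part has
no real root, equivalently no linear real polynomial `t - a` divides the primal part. -/
def BoundedD (M : DHq[X]) : Prop :=
  ∀ a : ℝ, ¬ RDvdQ (Polynomial.X - Polynomial.C a) (primal M)

/-- A generic motion polynomial: monic, a motion polynomial, with `mrpf` of the primal
part equal to `1`. -/
def GenericD (M : DHq[X]) : Prop :=
  M.Monic ∧ IsMotion M ∧ ReducedQ (primal M)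

/-- The monic linear dual quaternion polynomial `t - p - ε d`. -/
def lin (p d : Hq) : DHq[X] := mp (Polynomial.X - Polynomial.C p) (-Polynomial.C d)

/-- `M` admits a factorization into monic linear motion polynomial factors. -/
def HasLinFact (M : DHq[X]) : Prop :=
  ∃ L : List DHq, (∀ h ∈ L, IsMotion (Polynomial.X - Polynomial.C h)) ∧
    M = (L.map fun h => Polynomial.X - Polynomial.C h).prod

end

section helpers

theorem dstar_fst (x : DHq) : (star x).fst = star x.fst := by
  show (inl (star x.fst) + inr (star x.snd) : DHq).fst = _
  simp
theorem dstar_snd (x : DHq) : (star x).snd = star x.snd := by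
  show (inl (star x.fst) + inr (star x.snd) : DHq).snd = _
  simp

noncomputable instance : StarRing DHq where
  star_involutive x := by
    apply TrivSqZeroExt.ext <;> simp only [dstar_fst, dstar_snd, star_star]
  star_mul x y := by
    apply TrivSqZeroExt.ext
    · simp [dstar_fst]
    · simp [dstar_fst, dstar_snd, add_comm]
  star_add x y := by
    apply TrivSqZeroExt.ext <;> simp [dstar_fst, dstar_snd]

section gen
variable {R : Type*} [Ring R] [StarRing R]

theorem cstar_coeff (A : R[X]) (n : ℕ) : (cstar A).coeff n = star (A.coeff n) := by
  unfold cstar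
  rw [Polynomial.sum_def, Polynomial.finsetSum_coeff]
  simp only [Polynomial.coeff_C_mul, Polynomial.coeff_X_pow, mul_ite, mul_one, mul_zero]
  rw [Finset.sum_ite_eq]
  split_ifs with h
  · rfl
  · rw [Polynomial.notMem_support_iff.mp h, star_zero]

theorem cstar_mul (A B : R[X]) : cstar (A * B) = cstar B * cstar A := by
  ext n
  rw [cstar_coeff, Polynomial.coeff_mul, Polynomial.coeff_mul, star_sum]
  refine Finset.sum_equiv (Equiv.prodComm ℕ ℕ) ?_ ?_
  · intro i; simp [add_comm]
  · intro i _; simp [cstar_coeff]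

theorem cstar_add (A B : R[X]) : cstar (A + B) = cstar A + cstar B := by
  ext n; simp [cstar_coeff]
theorem cstar_neg (A : R[X]) : cstar (-A) = -cstar A := by
  ext n; simp [cstar_coeff]
theorem cstar_sub (A B : R[X]) : cstar (A - B) = cstar A - cstar B := by
  ext n; simp [cstar_coeff]
theorem cstar_cstar (A : R[X]) : cstar (cstar A) = A := by
  ext n; simp [cstar_coeff]
theorem cstar_zero : cstar (0 : R[X]) = 0 := by
  ext n; simp [cstar_coeff]
theorem cstar_C (a : R) : cstar (C a) = C (star a) := by
  ext n; simp only [cstar_coeff, Polynomial.coeff_C]; split_ifs <;> simp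
theorem cstar_X : cstar (X : R[X]) = X := by
  ext n; simp only [cstar_coeff, Polynomial.coeff_X]; split_ifs <;> simp
theorem cstar_one : cstar (1 : R[X]) = 1 := by
  rw [← C_1, cstar_C, star_one]
theorem cstar_natDegree (A : R[X]) : (cstar A).natDegree = A.natDegree := by
  apply le_antisymm <;> rw [Polynomial.natDegree_le_iff_coeff_eq_zero] <;> intro n hn
  · rw [cstar_coeff, Polynomial.coeff_eq_zero_of_natDegree_lt hn, star_zero]
  · rw [← cstar_cstar A, cstar_coeff, Polynomial.coeff_eq_zero_of_natDegree_lt hn, star_zero]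
theorem cstar_monic {A : R[X]} (h : A.Monic) : (cstar A).Monic := by
  unfold Monic Polynomial.leadingCoeff at *
  rw [cstar_natDegree, cstar_coeff, h, star_one]
end gen

/-- dual part -/
noncomputable def dualp (A : DHq[X]) : Hq[X] := A.sum fun n a => C a.snd * X ^ n

theorem dualp_coeff (A : DHq[X]) (n : ℕ) : (dualp A).coeff n = (A.coeff n).snd := by
  unfold dualp
  rw [Polynomial.sum_def, Polynomial.finsetSum_coeff]
  simp only [Polynomial.coeff_C_mul, Polynomial.coeff_X_pow, mul_ite, mul_one, mul_zero]
  rw [Finset.sum_ite_eq]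
  split_ifs with h
  · rfl
  · rw [Polynomial.notMem_support_iff.mp h, snd_zero]
theorem primal_coeff (A : DHq[X]) (n : ℕ) : (primal A).coeff n = (A.coeff n).fst := by
  simp [primal, Polynomial.coeff_map]
theorem dhQ_coeff (A : Hq[X]) (n : ℕ) : (dhQ A).coeff n = inl (A.coeff n) := by
  simp [dhQ, Polynomial.coeff_map]
theorem qPoly_coeff (A : ℝ[X]) (n : ℕ) : (qPoly A).coeff n = ((A.coeff n : ℝ) : Hq) := by
  simp [qPoly, Polynomial.coeff_map]
theorem mp_coeff (A B : Hq[X]) (n : ℕ) : (mp A B).coeff n = inl (A.coeff n) + inr (B.coeff n) := by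
  ext <;> simp [mp, dhQ_coeff]
theorem mp_eta (A : DHq[X]) : mp (primal A) (dualp A) = A := by
  ext n <;> simp [mp_coeff, primal_coeff, dualp_coeff]
theorem primal_mp (A B : Hq[X]) : primal (mp A B) = A := by
  ext n : 1; simp [mp_coeff, primal_coeff]
theorem dualp_mp (A B : Hq[X]) : dualp (mp A B) = B := by
  ext n : 1; simp [mp_coeff, dualp_coeff]
theorem primal_mul (A B : DHq[X]) : primal (A * B) = primal A * primal B := by
  simp [primal, Polynomial.map_mul]
theorem primal_add (A B : DHq[X]) : primal (A + B) = primal A + primal B := by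
  simp [primal, Polynomial.map_add]
theorem primal_one : primal (1 : DHq[X]) = 1 := by
  simp [primal]
theorem primal_dhQ (A : Hq[X]) : primal (dhQ A) = A := by
  ext n : 1; simp [dhQ_coeff, primal_coeff]
theorem dualp_dhQ (A : Hq[X]) : dualp (dhQ A) = 0 := by
  ext n : 1; simp [dhQ_coeff, dualp_coeff]
theorem dhQ_mul (A B : Hq[X]) : dhQ (A * B) = dhQ A * dhQ B := by
  simp [dhQ, Polynomial.map_mul]
theorem dhQ_add (A B : Hq[X]) : dhQ (A + B) = dhQ A + dhQ B := by
  simp [dhQ, Polynomial.map_add]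
theorem primal_cstar (A : DHq[X]) : primal (cstar A) = cstar (primal A) := by
  ext n : 1; simp [cstar_coeff, primal_coeff, dstar_fst]
theorem dhQ_cstar (A : Hq[X]) : dhQ (cstar A) = cstar (dhQ A) := by
  ext n : 1; apply TrivSqZeroExt.ext <;> simp [cstar_coeff, dhQ_coeff, dstar_fst, dstar_snd]
theorem mp_mul (A B A' B' : Hq[X]) : mp A B * mp A' B' = mp (A * A') (A * B' + B * A') := by
  have h : ∀ Z : DHq[X], Z * C (ε : DHq) = C ε * Z := by
    intro Z
    ext n <;> simp
  have h2 : C (ε : DHq) * C ε = 0 := by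
    rw [← C_mul, DualNumber.eps_mul_eps, C_0]
  simp only [mp, dhQ_mul, dhQ_add]
  have e : C ε * dhQ B * (C ε * dhQ B') = 0 := by
    rw [← mul_assoc, mul_assoc (C ε), h, ← mul_assoc, h2, zero_mul, zero_mul]
  have e2 : dhQ A * (C ε * dhQ B') = C ε * (dhQ A * dhQ B') := by
    rw [← mul_assoc, h, mul_assoc]
  rw [add_mul, mul_add, mul_add, e, e2]
  noncomm_ring
theorem mp_cstar (A B : Hq[X]) : cstar (mp A B) = mp (cstar A) (cstar B) := by
  ext n : 1; apply TrivSqZeroExt.ext <;> simp [cstar_coeff, mp_coeff, dstar_fst, dstar_snd]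
theorem dhQ_eq_mp (A : Hq[X]) : dhQ A = mp A 0 := by
  simp [mp, dhQ]
theorem mp_inj {A B A' B' : Hq[X]} (h : mp A B = mp A' B') : A = A' ∧ B = B' := by
  constructor
  · rw [← primal_mp A B, h, primal_mp]
  · rw [← dualp_mp A B, h, dualp_mp]

theorem qPoly_mul (f g : ℝ[X]) : qPoly (f * g) = qPoly f * qPoly g := by
  simp [qPoly, Polynomial.map_mul]
theorem qPoly_add (f g : ℝ[X]) : qPoly (f + g) = qPoly f + qPoly g := by
  simp [qPoly]
theorem qPoly_pow (f : ℝ[X]) (n : ℕ) : qPoly (f ^ n) = qPoly f ^ n := by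
  simp [qPoly, Polynomial.map_pow]
theorem qPoly_one : qPoly 1 = 1 := by simp [qPoly]
theorem qPoly_inj {f g : ℝ[X]} (h : qPoly f = qPoly g) : f = g :=
  Polynomial.map_injective _ (algebraMap ℝ Hq).injective h
theorem qPoly_comm (f : ℝ[X]) (A : Hq[X]) : qPoly f * A = A * qPoly f := by
  induction f using Polynomial.induction_on' with
  | add p q hp hq => rw [qPoly_add, add_mul, mul_add, hp, hq]
  | monomial n a =>
    rw [qPoly, Polynomial.map_monomial, ← Polynomial.C_mul_X_pow_eq_monomial]
    rw [mul_assoc, Polynomial.X_pow_mul, ← mul_assoc, ← mul_assoc]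
    congr 1
    ext n : 1
    rw [Polynomial.coeff_C_mul, Polynomial.coeff_mul_C]
    exact Algebra.commutes _ _
theorem qPoly_star (f : ℝ[X]) : cstar (qPoly f) = qPoly f := by
  ext n : 1; rw [cstar_coeff, qPoly_coeff]; simp
theorem qPoly_monic {f : ℝ[X]} (h : f.Monic) : (qPoly f).Monic := h.map _
theorem qPoly_ne {f : ℝ[X]} (h : f ≠ 0) : qPoly f ≠ 0 := by
  intro h1; apply h; apply qPoly_inj; rw [h1]; simp [qPoly]
theorem dhQ_monic {f : Hq[X]} (h : f.Monic) : (dhQ f).Monic := h.map _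
theorem primal_monic {f : DHq[X]} (h : f.Monic) : (primal f).Monic := h.map _
theorem dPoly_comm (f : ℝ[X]) (A : DHq[X]) : dPoly f * A = A * dPoly f := by
  rw [← mp_eta A, dPoly, dhQ_eq_mp, mp_mul, mp_mul]
  simp [qPoly_comm f]
theorem dPoly_star (f : ℝ[X]) : cstar (dPoly f) = dPoly f := by
  rw [dPoly, ← dhQ_cstar, qPoly_star]
theorem dPoly_monic {f : ℝ[X]} (h : f.Monic) : (dPoly f).Monic := dhQ_monic (qPoly_monic h)
theorem dPoly_mul (f g : ℝ[X]) : dPoly (f * g) = dPoly f * dPoly g := by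
  simp [dPoly, qPoly_mul, dhQ_mul]
theorem dPoly_one : dPoly 1 = 1 := by simp [dPoly, qPoly_one, dhQ]
theorem primal_dPoly (f : ℝ[X]) : primal (dPoly f) = qPoly f := primal_dhQ _

theorem real_of_star {A : Hq[X]} (h : cstar A = A) : ∃ f : ℝ[X], A = qPoly f := by
  refine ⟨A.sum fun n a => C a.re * X ^ n, ?_⟩
  ext n : 1
  rw [qPoly_coeff, Polynomial.sum_def, Polynomial.finsetSum_coeff]
  simp only [Polynomial.coeff_C_mul, Polynomial.coeff_X_pow, mul_ite, mul_one, mul_zero]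
  rw [Finset.sum_ite_eq]
  split_ifs with h'
  · rw [← Quaternion.star_eq_self, ← cstar_coeff, h]
  · rw [Polynomial.notMem_support_iff.mp h']; rfl

theorem nu_real (A : Hq[X]) : ∃ f : ℝ[X], A * cstar A = qPoly f :=
  real_of_star (by rw [cstar_mul, cstar_cstar])
theorem tr_real (A : Hq[X]) : ∃ f : ℝ[X], A + cstar A = qPoly f :=
  real_of_star (by rw [cstar_add, cstar_cstar, add_comm])
theorem nu_comm (A : Hq[X]) : cstar A * A = A * cstar A := by
  by_cases h : A = 0
  · simp [h, cstar_zero]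
  · obtain ⟨f, hf⟩ := nu_real A
    apply mul_left_cancel₀ h
    rw [← mul_assoc, hf, qPoly_comm]
theorem tr_comm (A B : Hq[X]) : A * B + cstar (A * B) = B * A + cstar (B * A) := by
  by_cases h : B = 0
  · simp [h, cstar_zero]
  · obtain ⟨f, hf⟩ := tr_real (A * B)
    obtain ⟨g, hg⟩ := nu_real B
    apply mul_right_cancel₀ h
    rw [hf, qPoly_comm, ← hf, mul_add, add_mul, cstar_mul, cstar_mul, ← mul_assoc, ← mul_assoc,
      mul_assoc (cstar A), nu_comm, hg, qPoly_comm]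

theorem dvd_of_qPoly {f g : ℝ[X]} (hg : g ≠ 0) {B : Hq[X]} (h : qPoly f = qPoly g * B) :
    g ∣ f ∧ ∃ b, B = qPoly b ∧ f = g * b := by
  have hB : cstar B = B := by
    apply mul_left_cancel₀ (qPoly_ne hg)
    rw [← h, qPoly_comm, ← qPoly_star g, ← cstar_mul, ← h, qPoly_star]
  obtain ⟨b, rfl⟩ := real_of_star hB
  rw [← qPoly_mul] at h
  have := qPoly_inj h
  exact ⟨⟨b, this⟩, b, rfl, this⟩

theorem mon_pow {N f : ℝ[X]} (hN : N.Monic) (hi : Irreducible N) (hf : f.Monic) {i : ℕ}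
    (h : f ∣ N ^ i) : ∃ e ≤ i, f = N ^ e := by
  obtain ⟨e, he, ha⟩ := (dvd_prime_pow hi.prime i).1 h
  exact ⟨e, he, eq_of_monic_of_associated hf (hN.pow e) ha⟩

theorem RDvdQ.mul_right {f : ℝ[X]} {A : Hq[X]} (h : RDvdQ f A) (B : Hq[X]) : RDvdQ f (A * B) := by
  obtain ⟨Z, rfl⟩ := h
  exact ⟨Z * B, by rw [mul_assoc]⟩
theorem RDvdQ.mul_left {f : ℝ[X]} {A : Hq[X]} (h : RDvdQ f A) (B : Hq[X]) : RDvdQ f (B * A) := by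
  obtain ⟨Z, rfl⟩ := h
  exact ⟨B * Z, by rw [← mul_assoc, ← qPoly_comm, mul_assoc]⟩
theorem RDvdQ.add {f : ℝ[X]} {A B : Hq[X]} (h : RDvdQ f A) (h' : RDvdQ f B) : RDvdQ f (A + B) := by
  obtain ⟨Z, rfl⟩ := h
  obtain ⟨W, rfl⟩ := h'
  exact ⟨Z + W, by rw [mul_add]⟩
theorem RDvdQ.neg {f : ℝ[X]} {A : Hq[X]} (h : RDvdQ f A) : RDvdQ f (-A) := by
  obtain ⟨Z, rfl⟩ := h
  exact ⟨-Z, by rw [mul_neg]⟩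
theorem RDvdQ.star {f : ℝ[X]} {A : Hq[X]} (h : RDvdQ f A) : RDvdQ f (cstar A) := by
  obtain ⟨Z, rfl⟩ := h
  exact ⟨cstar Z, by rw [cstar_mul, qPoly_star, qPoly_comm]⟩
theorem RDvdQ.self (f : ℝ[X]) : RDvdQ f (qPoly f) := ⟨1, by rw [mul_one]⟩
theorem RDvdQ.trans {f g : ℝ[X]} {A : Hq[X]} (h : RDvdQ f A) (h' : g ∣ f) : RDvdQ g A := by
  obtain ⟨Z, rfl⟩ := h
  obtain ⟨W, rfl⟩ := h'
  exact ⟨qPoly W * Z, by rw [qPoly_mul, mul_assoc]⟩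

theorem red_of {N : ℝ[X]} (hN : N.Monic) (hi : Irreducible N) {A : Hq[X]} {a : ℕ}
    (hA : A * cstar A = qPoly (N ^ a)) (h : ¬ RDvdQ N A) : ReducedQ A := by
  rintro f hf ⟨B, hB⟩
  have h1 : f ∣ N ^ a := by
    refine (dvd_of_qPoly hf.ne_zero (B := B * cstar A) ?_).1
    rw [← hA, ← mul_assoc, ← hB]
  obtain ⟨e, -, rfl⟩ := mon_pow hN hi hf h1
  rcases e with _ | e
  · simp
  · exact absurd (RDvdQ.trans ⟨B, hB⟩ (dvd_pow_self N (by omega))) h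

theorem dnu_comm {A : DHq[X]} (hA : A.Monic) {f : ℝ[X]} (h : A * cstar A = dPoly f) :
    cstar A * A = dPoly f := by
  apply hA.isRegular.left
  show A * (cstar A * A) = A * dPoly f
  rw [← mul_assoc, h, dPoly_comm]

theorem dcancel {A Y : DHq[X]} (hA : A.Monic) {f g : ℝ[X]} (hf : f.Monic)
    (h : A * cstar A = dPoly f) (h2 : (A * Y) * cstar (A * Y) = dPoly (f * g)) :
    Y * cstar Y = dPoly g := by
  have h3 := dnu_comm hA h
  have e : cstar A * ((A * Y) * cstar (A * Y)) * A = dPoly f * (dPoly f * (Y * cstar Y)) := by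
    rw [cstar_mul, dPoly_comm f (Y * cstar Y), ← h3]
    simp only [mul_assoc]
  rw [h2, ← dPoly_comm, mul_assoc, h3, dPoly_mul, mul_assoc, dPoly_comm g] at e
  apply (dPoly_monic hf).isRegular.left
  apply (dPoly_monic hf).isRegular.left
  exact e.symm

theorem lin_of_mod {N : ℝ[X]} (hN : N.Monic) (h2 : N.natDegree = 2) (Y : DHq[X]) :
    ∃ (S : DHq[X]) (r1 r0 : DHq), Y = dPoly N * S + (X * C r1 + C r0) := by
  refine ⟨Y /ₘ dPoly N, (Y %ₘ dPoly N).coeff 1, (Y %ₘ dPoly N).coeff 0, ?_⟩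
  have hm := dPoly_monic hN
  have hd : (dPoly N).natDegree = 2 := by
    rw [dPoly, dhQ, qPoly, (hN.map _).natDegree_map, hN.natDegree_map, h2]
  have hlt : (Y %ₘ dPoly N).natDegree < 2 := by
    rw [← hd]
    apply Polynomial.natDegree_modByMonic_lt _ hm
    intro h; rw [h] at hd; simp at hd
  have e : Y %ₘ dPoly N = X * C ((Y %ₘ dPoly N).coeff 1) + C ((Y %ₘ dPoly N).coeff 0) := by
    conv_lhs => rw [Polynomial.eq_X_add_C_of_natDegree_le_one (p := Y %ₘ dPoly N) (by omega)]
    rw [Polynomial.X_mul]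
  rw [← e, add_comm, Polynomial.modByMonic_add_div]

theorem peel {N : ℝ[X]} (hN : N.Monic) (h2 : N.natDegree = 2) {Y : DHq[X]} {b : ℕ}
    (hY : Y * cstar Y = dPoly (N ^ (b + 1))) (hr : ¬ RDvdQ N (primal Y)) :
    ∃ (h : DHq) (Y1 : DHq[X]), Y = (X - C h) * Y1 ∧
      (X - C h) * cstar (X - C h) = dPoly N ∧ Y1 * cstar Y1 = dPoly (N ^ b) := by
  obtain ⟨S, r1, r0, e⟩ := lin_of_mod hN h2 Y
  have hdiv : ∃ W, (X * C r1 + C r0) * cstar (X * C r1 + C r0) = dPoly N * W := by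
    set R := X * C r1 + C r0
    have eR : R = Y - dPoly N * S := by rw [e]; abel
    refine ⟨dPoly (N ^ b) - Y * cstar S - S * cstar Y + S * dPoly N * cstar S, ?_⟩
    conv_lhs => rw [eR]
    rw [cstar_sub, sub_mul, mul_sub, mul_sub, hY, cstar_mul, dPoly_star, pow_succ', dPoly_mul,
      ← dPoly_comm N (cstar S), ← mul_assoc Y, ← dPoly_comm N Y]
    simp only [mul_add, mul_sub, mul_assoc]
    abel
  have hr1 : r1.fst ≠ 0 := by
    intro h0
    apply hr
    obtain ⟨W, hW⟩ := hdiv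
    have eP : primal (X * C r1 + C r0) = C r0.fst := by
      simp [primal, h0]
    have := congrArg primal hW
    rw [primal_mul, primal_cstar, eP, primal_mul, primal_dPoly, cstar_C, ← C_mul] at this
    have hz : primal W = 0 := by
      by_contra hne
      have hd := congrArg natDegree this
      rw [natDegree_C, (qPoly_monic hN).natDegree_mul' hne, qPoly, hN.natDegree_map, h2] at hd
      omega
    rw [hz, mul_zero, C_eq_zero] at this
    have h00 : r0.fst = 0 := by
      rcases mul_eq_zero.mp this with h | h
      · exact h
      · exact star_eq_zero.mp h
    refine ⟨primal S, ?_⟩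
    conv_lhs => rw [e]
    rw [primal_add, eP, h00, primal_mul, primal_dPoly, C_0, add_zero]
  obtain ⟨s, hs1, hs2⟩ : ∃ s : DHq, r1 * s = 1 ∧ s * r1 = 1 := by
    refine ⟨inl (r1.fst)⁻¹ - inr ((r1.fst)⁻¹ * r1.snd * (r1.fst)⁻¹), ?_, ?_⟩
    · apply TrivSqZeroExt.ext
      · simp [hr1]
      · simp [mul_assoc, hr1]
    · apply TrivSqZeroExt.ext
      · simp [hr1]
      · simp [mul_assoc, hr1]
  have eh : X * C r1 + C r0 = (X - C (-(r0 * s))) * C r1 := by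
    rw [sub_mul, ← C_mul, neg_mul, mul_assoc, hs2]; simp
  set h := -(r0 * s) with hh
  have hm : (X - C h : DHq[X]).Monic := monic_X_sub_C h
  have hd1 : (X - C h : DHq[X]).natDegree = 1 := natDegree_X_sub_C h
  have hnorm : (X - C h) * cstar (X - C h) = dPoly N := by
    obtain ⟨W, hW⟩ := hdiv
    rw [eh, cstar_mul, cstar_C] at hW
    have hc : ∀ Z : DHq[X], C (r1 * star r1) * Z = Z * C (r1 * star r1) := by
      intro Z
      have key : ∀ z : DHq, (r1 * star r1) * z = z * (r1 * star r1) := by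
        intro z
        apply TrivSqZeroExt.ext
        · simp [dstar_fst, Quaternion.self_mul_star]
          exact Quaternion.coe_commutes _ _
        · have : r1.fst * star r1.snd + r1.snd * star r1.fst =
              (((r1.fst * star r1.snd + r1.snd * star r1.fst).re : ℝ) : Hq) := by
            rw [← Quaternion.star_eq_self]; simp [add_comm]
          have e1 : (r1 * star r1).snd = (((r1.fst * star r1.snd + r1.snd * star r1.fst).re : ℝ) : Hq) := by
            rw [← this]; simp [dstar_fst, dstar_snd]
          have e2 : (r1 * star r1).fst = ((Quaternion.normSq r1.fst : ℝ) : Hq) := by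
            simp [dstar_fst, Quaternion.self_mul_star]
          generalize r1 * star r1 = w at e1 e2
          rw [TrivSqZeroExt.snd_mul, TrivSqZeroExt.snd_mul, e1, e2]
          simp only [smul_eq_mul, MulOpposite.smul_eq_mul_unop, MulOpposite.unop_op]
          rw [Quaternion.coe_commutes, Quaternion.coe_commutes, add_comm]
      ext n : 1
      rw [coeff_C_mul, coeff_mul_C, key]
    have hW2 : (X - C h) * cstar (X - C h) = dPoly N * (W * C (star s * s)) := by
      rw [← mul_assoc, ← hW]
      have : C r1 * (C (star r1) * cstar (X - C h)) = cstar (X - C h) * C (r1 * star r1) := by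
        rw [← mul_assoc, ← C_mul, hc]
      rw [mul_assoc (X - C h), this, mul_assoc, mul_assoc, ← C_mul]
      have : r1 * star r1 * (star s * s) = 1 := by
        rw [mul_assoc, ← mul_assoc (star r1), ← star_mul, hs2, star_one, one_mul, hs1]
      rw [this, C_1, mul_one]
    set W' := W * C (star s * s)
    have hmm := hm.mul (cstar_monic hm)
    have hW'm : W'.Monic := (dPoly_monic hN).of_mul_monic_left (hW2 ▸ hmm)
    have hd := congrArg natDegree hW2
    rw [hm.natDegree_mul (cstar_monic hm), (dPoly_monic hN).natDegree_mul hW'm, cstar_natDegree, hd1,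
      dPoly, dhQ, qPoly, (hN.map _).natDegree_map, hN.natDegree_map, h2] at hd
    have : W' = 1 := hW'm.natDegree_eq_zero.mp (by omega)
    rw [hW2, this, mul_one]
  have hYe : Y = (X - C h) * (cstar (X - C h) * S + C r1) := by
    rw [mul_add, ← mul_assoc, hnorm, ← eh, ← e]
  refine ⟨h, _, hYe, hnorm, ?_⟩
  rw [hYe, pow_succ'] at hY
  exact dcancel hm hN hnorm hY

theorem exq (a b c d : ℝ) : ∃ q : Hq, q.re = a ∧ q.imI = b ∧ q.imJ = c ∧ q.imK = d :=
  ⟨⟨a, b, c, d⟩, rfl, rfl, rfl, rfl⟩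

theorem rdvd_coprime {N f : ℝ[X]} (hi : Irreducible N) {A : Hq[X]} (h : RDvdQ N (qPoly f * A))
    (hA : ¬ RDvdQ N A) : N ∣ f := by
  by_contra hn
  obtain ⟨u, v, huv⟩ := (hi.coprime_iff_not_dvd).2 hn
  apply hA
  have : A = qPoly u * (qPoly N * A) + qPoly v * (qPoly f * A) := by
    rw [← mul_assoc, ← mul_assoc, ← qPoly_mul, ← qPoly_mul, ← add_mul, ← qPoly_add, huv, qPoly_one,
      one_mul]
  rw [this]
  exact (RDvdQ.mul_left ((RDvdQ.self N).mul_right A) _).add (h.mul_left _)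

theorem tr_nondeg {N : ℝ[X]} {K : Hq[X]}
    (h : ∀ x : Hq, RDvdQ N (K * C x + cstar (K * C x))) : RDvdQ N K := by
  obtain ⟨I, i0, i1, i2, i3⟩ := exq 0 1 0 0
  obtain ⟨J, j0, j1, j2, j3⟩ := exq 0 0 1 0
  obtain ⟨L, l0, l1, l2, l3⟩ := exq 0 0 0 1
  obtain ⟨H, h0, h1, h2, h3⟩ := exq (1/2) 0 0 0
  have e : K = ((K * C 1 + cstar (K * C 1)) + -((K * C I + cstar (K * C I)) * C I)
      + -((K * C J + cstar (K * C J)) * C J) + -((K * C L + cstar (K * C L)) * C L)) * C H := by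
    ext n : 1
    simp only [coeff_mul_C, coeff_add, coeff_neg, cstar_coeff]
    generalize K.coeff n = q
    ext <;> simp [i0, i1, i2, i3, j0, j1, j2, j3, l0, l1, l2, l3, h0, h1, h2, h3] <;> ring
  rw [e]
  exact ((((h 1).add ((h I).mul_right _).neg).add ((h J).mul_right _).neg).add
    ((h L).mul_right _).neg).mul_right _

theorem absorb {N : ℝ[X]} (hi : Irreducible N) {A S K : Hq[X]} (hS : RDvdQ N (S * cstar S))
    (hK : ¬ RDvdQ N (S * K)) (h : RDvdQ N (A * (S * K))) : RDvdQ N (A * S) := by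
  by_contra hn
  apply hK
  apply tr_nondeg
  intro x
  have e1 := tr_comm S (K * C x)
  rw [← mul_assoc] at e1
  rw [e1]
  obtain ⟨t, ht⟩ := tr_real (K * C x * S)
  rw [ht]
  suffices N ∣ t from (RDvdQ.self t).trans this
  refine rdvd_coprime hi (A := A * S) ?_ hn
  rw [qPoly_comm, ← ht, mul_add]
  refine RDvdQ.add ?_ ?_
  · have : A * S * (K * C x * S) = (A * (S * K)) * (C x * S) := by simp only [mul_assoc]
    rw [this]; exact h.mul_right _
  · have : A * S * cstar (K * C x * S) = A * ((S * cstar S) * cstar (K * C x)) := by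
      rw [cstar_mul (K * C x)]; simp only [mul_assoc]
    rw [this]; exact (hS.mul_right _).mul_left _

theorem absorb' {N : ℝ[X]} (hi : Irreducible N) {A S K : Hq[X]} (hS : RDvdQ N (S * cstar S))
    (hK : ¬ RDvdQ N (K * S)) (h : RDvdQ N ((K * S) * A)) : RDvdQ N (S * A) := by
  have := absorb hi (A := cstar A) (S := cstar S) (K := cstar K) (N := N)
    (by rw [cstar_cstar, nu_comm]; exact hS)
    (by rw [← cstar_mul]; intro h; apply hK; rw [← cstar_cstar (K * S)]; exact h.star)
    (by rw [← cstar_mul, ← cstar_mul]; exact h.star)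
  rw [← cstar_mul] at this
  rw [← cstar_cstar (S * A)]; exact this.star


theorem rdvd_cancel {N : ℝ[X]} (hN : N.Monic) {a b : ℕ} {A : Hq[X]}
    (h : RDvdQ (N ^ (a + b)) (qPoly (N ^ a) * A)) : RDvdQ (N ^ b) A := by
  obtain ⟨B, hB⟩ := h
  refine ⟨B, ?_⟩
  apply mul_left_cancel₀ (qPoly_ne (hN.pow a).ne_zero)
  rw [hB, pow_add, qPoly_mul, mul_assoc]

theorem peelQ {N : ℝ[X]} (hN : N.Monic) (h2 : N.natDegree = 2) {Y : Hq[X]} {b : ℕ}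
    (hY : Y * cstar Y = qPoly (N ^ (b + 1))) (hr : ¬ RDvdQ N Y) :
    ∃ (h : Hq) (Y1 : Hq[X]), Y = Y1 * (X - C h) ∧
      (X - C h) * cstar (X - C h) = qPoly N ∧ Y1 * cstar Y1 = qPoly (N ^ b) := by
  have hY' : dhQ (cstar Y) * cstar (dhQ (cstar Y)) = dPoly (N ^ (b + 1)) := by
    rw [← dhQ_cstar, ← dhQ_mul, cstar_cstar, nu_comm, hY]; rfl
  have hr' : ¬ RDvdQ N (primal (dhQ (cstar Y))) := by
    rw [primal_dhQ]; intro h; apply hr; rw [← cstar_cstar Y]; exact h.star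
  obtain ⟨h, Y1, e1, e2, e3⟩ := peel hN h2 hY' hr'
  have f1 := congrArg primal e1
  have f2 := congrArg primal e2
  have f3 := congrArg primal e3
  have hx : primal (X - C h) = X - C h.fst := by simp [primal]
  rw [primal_mul, primal_dhQ, hx] at f1
  rw [primal_mul, primal_cstar, hx, primal_dPoly] at f2
  rw [primal_mul, primal_cstar, primal_dPoly] at f3
  have hs : cstar (X - C h.fst) = X - C (star h.fst) := by rw [cstar_sub, cstar_X, cstar_C]
  refine ⟨star h.fst, cstar (primal Y1), ?_, ?_, ?_⟩
  · rw [← cstar_cstar Y, f1, cstar_mul, hs]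
  · rw [← hs, cstar_cstar, nu_comm, f2]
  · rw [cstar_cstar, nu_comm, f3]

theorem split {N : ℝ[X]} (hN : N.Monic) (hi : Irreducible N) (h2 : N.natDegree = 2) (k : ℕ) :
    ∀ (a b : ℕ) (L : Hq[X]) (Y : DHq[X]), L.Monic → Y.Monic → L * cstar L = qPoly (N ^ a) →
      Y * cstar Y = dPoly (N ^ b) → ¬ RDvdQ N L → ¬ RDvdQ N (primal Y) →
      RDvdQ (N ^ k) (L * primal Y) →
      ∃ (A F : Hq[X]) (G B : DHq[X]) (a' b' : ℕ), L = A * F ∧ Y = G * B ∧ A.Monic ∧ F.Monic ∧ G.Monic ∧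
        B.Monic ∧ A * cstar A = qPoly (N ^ a') ∧ F * cstar F = qPoly (N ^ k) ∧
        G * cstar G = dPoly (N ^ k) ∧ B * cstar B = dPoly (N ^ b') ∧ F * primal G = qPoly (N ^ k) := by
  induction k with
  | zero =>
    intro a b L Y hL hY hLn hYn _ _ _
    refine ⟨L, 1, 1, Y, a, b, ?_⟩
    simp [hL, hY, hLn, hYn, cstar_one, qPoly_one, dPoly_one, primal_one]
  | succ k ih =>
    intro a b L Y hL hY hLn hYn hLr hYr hdiv
    have hdN : RDvdQ N (L * primal Y) := hdiv.trans (dvd_pow_self N (by omega))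
    obtain ⟨a, rfl⟩ : ∃ a', a = a' + 1 := by
      rcases a with _ | a
      · exfalso
        apply hYr
        rw [pow_zero, qPoly_one] at hLn
        have : primal Y = cstar L * (L * primal Y) := by
          rw [← mul_assoc, nu_comm, hLn, one_mul]
        rw [this]; exact hdN.mul_left _
      · exact ⟨a, rfl⟩
    have hYn' : primal Y * cstar (primal Y) = qPoly (N ^ b) := by
      rw [← primal_cstar, ← primal_mul, hYn, primal_dPoly]
    obtain ⟨b, rfl⟩ : ∃ b', b = b' + 1 := by
      rcases b with _ | b
      · exfalso
        apply hLr
        rw [pow_zero, qPoly_one] at hYn'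
        have : L = (L * primal Y) * cstar (primal Y) := by
          rw [mul_assoc, hYn', mul_one]
        rw [this]; exact hdN.mul_right _
      · exact ⟨b, rfl⟩
    obtain ⟨p, L1, eL, np, nL1⟩ := peelQ hN h2 hLn hLr
    obtain ⟨h, Y1, eY, nh, nY1⟩ := peel hN h2 hYn hYr
    have hx : primal (X - C h) = X - C h.fst := by simp [primal]
    have hpY : primal Y = (X - C h.fst) * primal Y1 := by rw [eY, primal_mul, hx]
    have nh' : (X - C h.fst) * cstar (X - C h.fst) = qPoly N := by
      rw [← hx, ← primal_cstar, ← primal_mul, nh, primal_dPoly]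
    have nY1' : primal Y1 * cstar (primal Y1) = qPoly (N ^ b) := by
      rw [← primal_cstar, ← primal_mul, nY1, primal_dPoly]
    have hL1 : ¬ RDvdQ N L1 := fun hh => hLr (eL ▸ hh.mul_right _)
    have hY1 : ¬ RDvdQ N (primal Y1) := fun hh => hYr (hpY ▸ hh.mul_left _)
    have hL1m : L1.Monic := by
      have := (monic_X_sub_C p).of_mul_monic_right (eL ▸ hL)
      exact this
    have hY1m : Y1.Monic := (monic_X_sub_C h).of_mul_monic_left (eY ▸ hY)
    have hprod : (X - C p) * (X - C h.fst) = qPoly N := by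
      have d1 : RDvdQ N (L * (X - C h.fst)) :=
        absorb hi (by rw [nh']; exact RDvdQ.self N) (hpY ▸ hYr) (hpY ▸ hdN)
      have d2 : RDvdQ N ((X - C p) * (X - C h.fst)) :=
        absorb' hi (by rw [np]; exact RDvdQ.self N) (eL ▸ hLr) (eL ▸ d1)
      obtain ⟨W, hW⟩ := d2
      have hm := (monic_X_sub_C p).mul (monic_X_sub_C h.fst)
      have hWm : W.Monic := (qPoly_monic hN).of_mul_monic_left (hW ▸ hm)
      have hd := congrArg natDegree hW
      rw [(monic_X_sub_C p).natDegree_mul (monic_X_sub_C h.fst), (qPoly_monic hN).natDegree_mul hWm,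
        natDegree_X_sub_C, natDegree_X_sub_C, qPoly, hN.natDegree_map, h2] at hd
      rw [hW, hWm.natDegree_eq_zero.mp (by omega), mul_one]
    have hdiv' : RDvdQ (N ^ k) (L1 * primal Y1) := by
      apply rdvd_cancel hN (a := 1)
      rw [add_comm 1 k]
      have : qPoly (N ^ 1) * (L1 * primal Y1) = L * primal Y := by
        rw [pow_one, eL, hpY, ← mul_assoc, qPoly_comm, ← hprod]; simp only [mul_assoc]
      rw [this]; exact hdiv
    obtain ⟨A, F, G, B, a', b', e1, e2, mA, mF, mG, mB, nA, nF, nG, nB, hFG⟩ :=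
      ih a b L1 Y1 hL1m hY1m nL1 nY1 hL1 hY1 hdiv'
    refine ⟨A, F * (X - C p), (X - C h) * G, B, a', b', ?_, ?_, mA, mF.mul (monic_X_sub_C p),
      (monic_X_sub_C h).mul mG, mB, nA, ?_, ?_, nB, ?_⟩
    · rw [eL, e1, mul_assoc]
    · rw [eY, e2, mul_assoc]
    · rw [cstar_mul, mul_assoc, ← mul_assoc (X - C p), np, qPoly_comm, ← mul_assoc, nF, pow_succ, qPoly_mul]
    · rw [cstar_mul, mul_assoc, ← mul_assoc G, nG, dPoly_comm, ← mul_assoc, nh, pow_succ', dPoly_mul]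
    · rw [primal_mul, hx, mul_assoc, ← mul_assoc (X - C p), hprod, qPoly_comm, ← mul_assoc, hFG, pow_succ, qPoly_mul]

theorem lgcd (D : Hq[X]) (f : Hq[X]) (hf : f.Monic) :
    ∃ L U V E W : Hq[X], L.Monic ∧ L = D * U + f * V ∧ D = L * E ∧ f = L * W := by
  classical
  let S : ℕ → Prop := fun n => ∃ L U V : Hq[X], L.Monic ∧ L = D * U + f * V ∧ L.natDegree = n
  have hS : ∃ n, S n := ⟨_, f, 0, 1, hf, by simp, rfl⟩
  obtain ⟨L, U, V, hL, hLe, hn⟩ := Nat.find_spec hS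
  have key : ∀ Z U' V' : Hq[X], Z = D * U' + f * V' → Z = L * (Z /ₘ L) := by
    intro Z U' V' hZ
    by_contra hne
    set R := Z %ₘ L with hR
    have hsum := Polynomial.modByMonic_add_div Z L
    have hR0 : R ≠ 0 := by
      intro h0; apply hne; rw [← hR, h0, zero_add] at hsum; exact hsum.symm
    have hl : R.leadingCoeff ≠ 0 := leadingCoeff_ne_zero.mpr hR0
    have hlt : R.degree < L.degree := Polynomial.degree_modByMonic_lt Z hL
    have hd : (R * C (R.leadingCoeff)⁻¹).natDegree = R.natDegree := by
      rw [natDegree_mul hR0 (by simpa using hR0), natDegree_C, add_zero]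
    refine Nat.find_min hS (m := R.natDegree) ?_ ⟨R * C (R.leadingCoeff)⁻¹, (U' - U * (Z /ₘ L)) * C (R.leadingCoeff)⁻¹, (V' - V * (Z /ₘ L)) * C (R.leadingCoeff)⁻¹, ?_, ?_, hd⟩
    · rw [← hn]; exact natDegree_lt_natDegree hR0 hlt
    · rw [Monic, leadingCoeff_mul, leadingCoeff_C, mul_inv_cancel₀ hl]
    · rw [← mul_assoc, ← mul_assoc, ← add_mul]
      congr 1
      rw [mul_sub, mul_sub, ← mul_assoc, ← mul_assoc, sub_add_sub_comm, ← hZ, ← add_mul, ← hLe, hR]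
      exact eq_sub_of_add_eq hsum
  exact ⟨L, U, V, _, _, hL, hLe, key D 1 0 (by simp), key f 0 1 (by simp)⟩

theorem lgcd_nu {N : ℝ[X]} (hN : N.Monic) (hi : Irreducible N) {D : Hq[X]} {i : ℕ}
    (hD : ¬ RDvdQ N D) (hDD : RDvdQ (N ^ i) (D * cstar D)) :
    ∃ L U V E : Hq[X], L.Monic ∧ L = D * U + qPoly (N ^ i) * V ∧ D = L * E ∧
      L * cstar L = qPoly (N ^ i) := by
  obtain ⟨L, U, V, E, W, hL, hLe, hE, hW⟩ := lgcd D (qPoly (N ^ i)) (qPoly_monic (hN.pow i))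
  refine ⟨L, U, V, E, hL, hLe, hE, ?_⟩
  have h1 : RDvdQ (N ^ i) (L * cstar L) := by
    have : L * cstar L = (D * U) * cstar (D * U) + (D * U) * cstar (qPoly (N ^ i) * V)
        + qPoly (N ^ i) * V * cstar L := by
      conv_lhs => rw [hLe]
      rw [add_mul, ← mul_add, ← cstar_add, ← hLe]
    rw [this]
    refine RDvdQ.add (RDvdQ.add ?_ ?_) ?_
    · obtain ⟨u, hu⟩ := nu_real U
      have : D * U * cstar (D * U) = qPoly u * (D * cstar D) := by
        rw [cstar_mul, mul_assoc, ← mul_assoc U, hu, qPoly_comm u (cstar D), ← mul_assoc, qPoly_comm]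
      rw [this]; exact hDD.mul_left _
    · exact ((RDvdQ.self _).mul_right V).star.mul_left _
    · exact ((RDvdQ.self _).mul_right V).mul_right _
  obtain ⟨l, hl⟩ := nu_real L
  obtain ⟨B, hB⟩ := h1
  obtain ⟨-, r, rfl, hr⟩ := dvd_of_qPoly (hN.pow i).ne_zero (hl ▸ hB)
  have hne := qPoly_ne (hN.pow i).ne_zero
  have hLs : cstar L = qPoly r * W := by
    apply mul_left_cancel₀ hne
    rw [← mul_assoc, ← hB, ← nu_comm, mul_assoc, ← hW, qPoly_comm]
  have hLr : L = qPoly r * cstar W := by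
    rw [← cstar_cstar L, hLs, cstar_mul, qPoly_star, qPoly_comm]
  have hrm : r.Monic := by
    have : (qPoly (N ^ i) * qPoly r).Monic := hB ▸ hL.mul (cstar_monic hL)
    have := (qPoly_monic (hN.pow i)).of_mul_monic_left this
    rw [qPoly] at this
    exact Polynomial.monic_of_injective (algebraMap ℝ Hq).injective this
  have hrd : r ∣ N ^ i := by
    refine (dvd_of_qPoly hrm.ne_zero (B := cstar W * W) ?_).1
    rw [← mul_assoc, ← hLr, ← hW]
  obtain ⟨e, -, rfl⟩ := mon_pow hN hi hrm hrd
  rcases e with _ | e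
  · rw [hB]; simp [qPoly_one]
  · exfalso; apply hD
    rw [hE]
    apply RDvdQ.mul_right
    exact RDvdQ.trans ⟨_, hLr⟩ (dvd_pow_self N (by omega))

theorem core {N : ℝ[X]} (hN : N.Monic) (hi : Irreducible N) (h2 : N.natDegree = 2)
    {n k j : ℕ} {Q D : Hq[X]} (hm : (mp (qPoly (N ^ k) * Q) D).Monic)
    (hjk : j ≤ k) (hkn : 2 * k ≤ n)
    (hnorm : mp (qPoly (N ^ k) * Q) D * cstar (mp (qPoly (N ^ k) * Q) D) = dPoly (N ^ n))
    (hD : ¬ RDvdQ N D) (hDD : RDvdQ (N ^ (k + j)) (D * cstar D))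
    (hQD : RDvdQ (N ^ j) (cstar Q * D)) (hQD' : ¬ RDvdQ (N ^ (j + 1)) (cstar Q * D)) :
    ∃ ML G₁ G₂ MR : DHq[X], mp (qPoly (N ^ k) * Q) D = ML * (G₁ * G₂) * MR ∧
      GenericD ML ∧ GenericD G₁ ∧ GenericD G₂ ∧ GenericD MR ∧
      primal (G₁ * G₂) = qPoly (N ^ k) := by
  obtain ⟨L, U, V, E, hL, hLe, hE, hLn⟩ := lgcd_nu hN hi hD hDD
  have hLQ : RDvdQ (N ^ j) (cstar L * Q) := by
    have : cstar L * Q = cstar U * cstar (cstar Q * D) + cstar V * qPoly (N ^ (k + j)) * Q := by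
      rw [hLe, cstar_add, cstar_mul, cstar_mul, cstar_mul, cstar_cstar, qPoly_star, add_mul]
      simp only [mul_assoc]
    rw [this]
    exact (hQD.star.mul_left _).add
      ((((RDvdQ.self (N ^ (k + j))).trans (pow_dvd_pow N (by omega))).mul_left _).mul_right _)
  obtain ⟨K, hK⟩ := hLQ
  have hLK : L * K = qPoly (N ^ k) * Q := by
    apply mul_left_cancel₀ (qPoly_ne (hN.pow j).ne_zero)
    rw [← mul_assoc, qPoly_comm, mul_assoc, ← hK, ← mul_assoc, hLn, add_comm, pow_add, qPoly_mul,
      mul_assoc]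
  have hMe : mp (qPoly (N ^ k) * Q) D = dhQ L * mp K E := by
    rw [dhQ_eq_mp, mp_mul, hLK, zero_mul, add_zero, ← hE]
  have hKr : ¬ RDvdQ N K := by
    intro h
    apply hQD'
    have e : cstar Q * D = cstar (cstar L * Q) * E := by
      rw [cstar_mul, cstar_cstar, hE, mul_assoc]
    rw [e]
    apply RDvdQ.mul_right
    apply RDvdQ.star
    obtain ⟨Z, rfl⟩ := h
    exact ⟨Z, by rw [hK, pow_succ, qPoly_mul, mul_assoc]⟩
  have hLr : ¬ RDvdQ N L := fun h => hD (hE ▸ h.mul_right _)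
  have hRm : (mp K E).Monic := (dhQ_monic hL).of_mul_monic_left (hMe ▸ hm)
  have hLnd : dhQ L * cstar (dhQ L) = dPoly (N ^ (k + j)) := by
    rw [← dhQ_cstar, ← dhQ_mul, hLn]; rfl
  have hRn : mp K E * cstar (mp K E) = dPoly (N ^ (n - (k + j))) := by
    apply dcancel (dhQ_monic hL) (hN.pow (k + j)) hLnd
    rw [← hMe, hnorm, ← pow_add]
    congr 2; omega
  obtain ⟨A, F, G, B, a', b', e1, e2, mA, mF, mG, mB, nA, nF, nG, nB, hFG⟩ :=
    split hN hi h2 k _ _ L (mp K E) hL hRm hLn hRn hLr (by rwa [primal_mp])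
      (by rw [primal_mp, hLK]; exact (RDvdQ.self _).mul_right _)
  have e2' : K = primal G * primal B := by rw [← primal_mul, ← e2, primal_mp]
  have gen1 : ∀ (Z : Hq[X]) (i : ℕ), Z.Monic → Z * cstar Z = qPoly (N ^ i) → ¬ RDvdQ N Z →
      GenericD (dhQ Z) := by
    intro Z i hZ hZn hZr
    refine ⟨dhQ_monic hZ, ⟨N ^ i, (hN.pow i).ne_zero, ?_⟩, ?_⟩
    · rw [← dhQ_cstar, ← dhQ_mul, hZn]; rfl
    · rw [primal_dhQ]; exact red_of hN hi hZn hZr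
  have gen2 : ∀ (Z : DHq[X]) (i : ℕ), Z.Monic → Z * cstar Z = dPoly (N ^ i) → ¬ RDvdQ N (primal Z) →
      GenericD Z := by
    intro Z i hZ hZn hZr
    refine ⟨hZ, ⟨N ^ i, (hN.pow i).ne_zero, hZn⟩, ?_⟩
    refine red_of hN hi (a := i) ?_ hZr
    rw [← primal_cstar, ← primal_mul, hZn, primal_dPoly]
  refine ⟨dhQ A, dhQ F, G, B, ?_, ?_, ?_, ?_, ?_, ?_⟩
  · rw [hMe, e1, e2, dhQ_mul]; simp only [mul_assoc]
  · exact gen1 A _ mA nA fun h => hLr (e1 ▸ h.mul_right _)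
  · exact gen1 F _ mF nF fun h => hLr (e1 ▸ h.mul_left _)
  · exact gen2 G _ mG nG fun h => hKr (e2' ▸ h.mul_right _)
  · exact gen2 B _ mB nB fun h => hKr (e2' ▸ h.mul_left _)
  · rw [primal_mul, primal_dhQ, hFG]

theorem exists_y {N : ℝ[X]} (hi : Irreducible N) {Q : Hq[X]} (hQ : ¬ RDvdQ N Q)
    (hn : RDvdQ N (Q * cstar Q)) : ∃ y : Hq, star y = -y ∧ ¬ RDvdQ N (cstar Q * C y * Q) := by
  by_contra hcon
  push Not at hcon
  have all : ∀ x : Hq, RDvdQ N (cstar Q * C x * Q) := by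
    intro x
    have e : cstar Q * C x * Q = cstar Q * C ((1/2 : ℝ) • (x - star x)) * Q
        + qPoly (C x.re) * (Q * cstar Q) := by
      have : C x = C ((1/2 : ℝ) • (x - star x)) + qPoly (C x.re) := by
        rw [qPoly, map_C, ← C_add]
        congr 1
        ext <;> simp <;> ring
      rw [this, mul_add, add_mul, ← qPoly_comm, mul_assoc (qPoly _), nu_comm]
    rw [e]
    refine (hcon _ ?_).add (hn.mul_left _)
    ext <;> simp <;> ring
  have hQ' : ¬ RDvdQ N (cstar Q) := fun h => hQ (by rw [← cstar_cstar Q]; exact h.star)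
  apply hQ'
  apply tr_nondeg
  intro x
  obtain ⟨t, ht⟩ := tr_real (cstar Q * C x)
  rw [ht]
  suffices N ∣ t from (RDvdQ.self t).trans this
  refine rdvd_coprime hi (A := Q) ?_ hQ
  rw [← ht]
  obtain ⟨I, i0, i1, i2, i3⟩ := exq 0 1 0 0
  obtain ⟨J, j0, j1, j2, j3⟩ := exq 0 0 1 0
  obtain ⟨L, l0, l1, l2, l3⟩ := exq 0 0 0 1
  obtain ⟨H, h0, h1, h2, h3⟩ := exq (1/2) 0 0 0
  have key : ∀ Z : Hq[X], Z + cstar Z = C H *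
      (Z + -(C I * Z * C I) + -(C J * Z * C J) + -(C L * Z * C L)) := by
    intro Z
    ext n : 1
    simp only [coeff_mul_C, coeff_C_mul, coeff_add, coeff_neg, cstar_coeff]
    generalize Z.coeff n = q
    ext <;> simp [i0, i1, i2, i3, j0, j1, j2, j3, l0, l1, l2, l3, h0, h1, h2, h3] <;> ring
  rw [key, mul_assoc]
  apply RDvdQ.mul_left
  simp only [add_mul, neg_mul]
  have aux : ∀ y : Hq, C y * (cstar Q * C x) * C y * Q = C y * (cstar Q * C (x * y) * Q) := by
    intro y; rw [C_mul]; simp only [mul_assoc]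
  rw [aux, aux, aux]
  exact (((all _).add ((all _).mul_left _).neg).add ((all _).mul_left _).neg).add
    ((all _).mul_left _).neg

theorem conj_monic {t t' : DHq} (h : t' * t = 1) {G : DHq[X]} (hG : G.Monic) :
    (C t' * G * C t).Monic := by
  apply monic_of_natDegree_le_of_coeff_eq_one G.natDegree
  · rw [natDegree_le_iff_coeff_eq_zero]
    intro n hn
    rw [coeff_mul_C, coeff_C_mul, coeff_eq_zero_of_natDegree_lt hn]; simp
  · rw [coeff_mul_C, coeff_C_mul, coeff_natDegree, hG, mul_one, h]

theorem conj_primal {t t' : DHq} (f : t.fst = 1) (f' : t'.fst = 1) (G : DHq[X]) :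
    primal (C t' * G * C t) = primal G := by
  rw [primal_mul, primal_mul]
  simp [primal, f, f']

theorem conj_generic {t t' : DHq} (h : t' * t = 1) (h' : t * t' = 1) (s : star t = t')
    (f : t.fst = 1) (f' : t'.fst = 1) {G : DHq[X]} (hG : GenericD G) : GenericD (C t' * G * C t) := by
  obtain ⟨m, ⟨p, hp0, hp⟩, r⟩ := hG
  refine ⟨conj_monic h m, ⟨p, hp0, ?_⟩, ?_⟩
  · have s' : star t' = t := by rw [← s, star_star]
    rw [cstar_mul, cstar_mul, cstar_C, cstar_C, s, s']
    have : C t' * G * C t * (C t' * (cstar G * C t)) = C t' * (G * (C t * C t') * cstar G) * C t := by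
      simp only [mul_assoc]
    rw [this, ← C_mul, h', C_1, mul_one, hp, ← dPoly_comm, mul_assoc, ← C_mul, h, C_1, mul_one]
  · rw [conj_primal f f']; exact r

theorem shift {N : ℝ[X]} (hN : N.Monic) (hi : Irreducible N) (h2 : N.natDegree = 2)
    {n k m : ℕ} {Q D : Hq[X]} (hm : (mp (qPoly (N ^ k) * Q) D).Monic)
    (hk1 : 1 ≤ k) (hkn : 2 * k ≤ n)
    (hnorm : mp (qPoly (N ^ k) * Q) D * cstar (mp (qPoly (N ^ k) * Q) D) = dPoly (N ^ n))
    (hD : ¬ RDvdQ N D) (hDD : RDvdQ (N ^ (k + k)) (D * cstar D)) (hQ : ¬ RDvdQ N Q)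
    (hQn : Q * cstar Q = qPoly (N ^ m))
    (hQD : RDvdQ (N ^ k) (cstar Q * D)) (hDQ : RDvdQ (N ^ k) (D * cstar Q))
    (hQD' : RDvdQ (N ^ (k + 1)) (cstar Q * D)) :
    ∃ ML G₁ G₂ MR : DHq[X], mp (qPoly (N ^ k) * Q) D = ML * (G₁ * G₂) * MR ∧
      GenericD ML ∧ GenericD G₁ ∧ GenericD G₂ ∧ GenericD MR ∧
      primal (G₁ * G₂) = qPoly (N ^ k) := by
  have hm1 : 1 ≤ m := by
    by_contra h0
    have : m = 0 := by omega
    rw [this, pow_zero, qPoly_one] at hQn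
    apply hD
    have : D = Q * (cstar Q * D) := by rw [← mul_assoc, hQn, one_mul]
    rw [this]
    exact (hQD.trans (dvd_pow_self N (by omega))).mul_left _
  have hNm : RDvdQ N (Q * cstar Q) := by
    rw [hQn]; exact (RDvdQ.self _).trans (dvd_pow_self N (by omega))
  obtain ⟨y, hy, hyQ⟩ := exists_y hi hQ hNm
  let t : DHq := inl 1 + inr y
  let t' : DHq := inl 1 + inr (-y)
  have f : t.fst = 1 := by simp [t]
  have f' : t'.fst = 1 := by simp [t']
  have s : star t = t' := by
    apply TrivSqZeroExt.ext
    · rw [dstar_fst, f, f', star_one]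
    · rw [dstar_snd]; simp [t, t', hy]
  have h : t' * t = 1 := by
    apply TrivSqZeroExt.ext <;> simp [t, t']
  have h' : t * t' = 1 := by
    apply TrivSqZeroExt.ext <;> simp [t, t']
  have s' : star t' = t := by rw [← s, star_star]
  have ct : C t = mp 1 (C y) := by
    ext n : 1; rw [mp_coeff, coeff_C, coeff_C, coeff_one]; split_ifs <;> simp [t]
  have ct' : C t' = mp 1 (-C y) := by
    ext n : 1; rw [mp_coeff, coeff_neg, coeff_C, coeff_C, coeff_one]; split_ifs <;> simp [t']
  set c := qPoly (N ^ k) with hc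
  set W := C y * Q - Q * C y with hW
  have eM : mp (c * Q) (D + c * W) = C t * mp (c * Q) D * C t' := by
    rw [ct, ct', mp_mul, mp_mul]
    congr 1
    · simp
    · rw [hW]
      simp only [one_mul, mul_one, mul_sub, mul_neg]
      rw [← mul_assoc, qPoly_comm (N ^ k) (C y), ← mul_assoc, ← mul_assoc]
      abel
  have eM' : mp (c * Q) D = C t' * mp (c * Q) (D + c * W) * C t := by
    rw [eM]
    have : C t' * (C t * mp (c * Q) D * C t') * C t = (C t' * C t) * mp (c * Q) D * (C t' * C t) := by
      simp only [mul_assoc]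
    rw [this, ← C_mul, h]; simp
  have hNc : RDvdQ N c := (RDvdQ.self _).trans (dvd_pow_self N (by omega))
  have hys : cstar (C y) = - C y := by rw [cstar_C, hy, C_neg]
  have hQW : cstar Q * W = cstar Q * C y * Q + - (qPoly (N ^ m) * C y) := by
    rw [hW, mul_sub, ← hQn, ← nu_comm, mul_assoc, mul_assoc, sub_eq_add_neg]
  obtain ⟨ML, G₁, G₂, MR, e, g1, g2, g3, g4, hp⟩ := core hN hi h2 (n := n) (k := k) (j := k) (Q := Q)
    (D := D + c * W) (by rw [← hc, eM]; exact conj_monic h' hm) le_rfl hkn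
    (by
      rw [← hc, eM, cstar_mul, cstar_mul, cstar_C, cstar_C, s, s']
      have : C t * mp (c * Q) D * C t' * (C t * (cstar (mp (c * Q) D) * C t')) =
        C t * (mp (c * Q) D * (C t' * C t) * cstar (mp (c * Q) D)) * C t' := by
        simp only [mul_assoc]
      rw [this, ← C_mul, h, C_1, mul_one, hnorm, ← dPoly_comm, mul_assoc, ← C_mul, h', C_1, mul_one])
    (by
      intro hh
      apply hD
      have : D = (D + c * W) + -(c * W) := by abel
      rw [this]
      exact hh.add (hNc.mul_right _).neg)
    (by
      have hDW : RDvdQ (N ^ k) (D * cstar W + cstar (D * cstar W)) := by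
        have e1 : D * cstar W = D * C y * cstar Q + -(D * cstar Q * C y) := by
          rw [hW, cstar_sub, cstar_mul, cstar_mul, hys]
          simp only [mul_sub, mul_neg, neg_mul, mul_assoc]; abel
        have e2 : D * cstar W + cstar (D * cstar W) =
            (D * C y * cstar Q + cstar (D * C y * cstar Q)) + -(D * cstar Q * C y + cstar (D * cstar Q * C y)) := by
          rw [e1, cstar_add, cstar_neg]; abel
        rw [e2, tr_comm, ← mul_assoc]
        have a1 := hQD.mul_right (C y)
        have a2 := hDQ.mul_right (C y)
        exact (a1.add a1.star).add (a2.add a2.star).neg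
      have e3 : (D + c * W) * cstar (D + c * W) = D * cstar D + c * (D * cstar W + cstar (D * cstar W))
          + c * c * (W * cstar W) := by
        have hcs : cstar c = c := qPoly_star _
        have hcc : ∀ Z, Z * c = c * Z := fun Z => (qPoly_comm _ Z).symm
        rw [cstar_add, cstar_mul, cstar_mul, cstar_cstar, hcs, hcc]
        simp only [mul_add, add_mul]
        rw [← mul_assoc D c, hcc D, mul_assoc c W (c * cstar W), ← mul_assoc W c, hcc W]
        simp only [mul_assoc]
        abel
      rw [e3]
      refine (hDD.add ?_).add ?_
      · obtain ⟨Z, hZ⟩ := hDW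
        exact ⟨Z, by rw [hZ, pow_add, qPoly_mul, mul_assoc]⟩
      · exact ⟨W * cstar W, by rw [pow_add, qPoly_mul]⟩)
    (by
      rw [mul_add, ← mul_assoc, ← qPoly_comm, mul_assoc]
      exact hQD.add ((RDvdQ.self _).mul_right _))
    (by
      intro hh
      apply hyQ
      have e1 : cstar Q * (D + c * W) = cstar Q * D + c * (cstar Q * W) := by
        rw [mul_add, ← mul_assoc, ← qPoly_comm, mul_assoc]
      rw [e1] at hh
      have hh2 : RDvdQ (N ^ (k + 1)) (c * (cstar Q * W)) := by
        have := hh.add hQD'.neg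
        rwa [add_comm (cstar Q * D), add_neg_cancel_right] at this
      have hh3 := rdvd_cancel hN hh2
      rw [pow_one, hQW] at hh3
      have hz : RDvdQ N (qPoly (N ^ m) * C y) :=
        ((RDvdQ.self _).trans (dvd_pow_self N (by omega))).mul_right _
      have := hh3.add hz
      rwa [neg_add_cancel_right] at this)
  refine ⟨C t' * ML * C t, C t' * G₁ * C t, C t' * G₂ * C t, C t' * MR * C t, ?_,
    conj_generic h h' s f f' g1, conj_generic h h' s f f' g2, conj_generic h h' s f f' g3,
    conj_generic h h' s f f' g4, ?_⟩
  · rw [eM', hc, e]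
    have key : ∀ A B : DHq[X], C t' * A * C t * (C t' * B * C t) = C t' * (A * B) * C t := by
      intro A B
      have : C t' * A * C t * (C t' * B * C t) = C t' * A * (C t * C t') * B * C t := by
        simp only [mul_assoc]
      rw [this, ← C_mul, h', C_1, mul_one]; simp only [mul_assoc]
    rw [key, key, key]
  · rw [primal_mul, conj_primal f f', conj_primal f f', ← primal_mul, hp]

theorem IsMotion.mul {A B : DHq[X]} (hA : IsMotion A) (hB : IsMotion B) : IsMotion (A * B) := by
  obtain ⟨f, hf, ef⟩ := hA
  obtain ⟨g, hg, eg⟩ := hB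
  refine ⟨f * g, mul_ne_zero hf hg, ?_⟩
  rw [cstar_mul, mul_assoc, ← mul_assoc B, eg, dPoly_comm, ← mul_assoc, ef, dPoly_mul]

theorem factor3_aux
    (n : ℕ) (P D : Hq[X]) (c : ℝ[X]) (Q : Hq[X]) (N g gR : ℝ[X])
    (M : DHq[X]) (hM : M = mp P D)
    (hmonic : M.Monic) (hred : ReducedD M)
    (hc : IsMrpfQ c P) (hPQ : P = qPoly c * Q) (hcdeg : 0 < c.natDegree)
    (hN : N.Monic)
    (hN2 : N.natDegree = 2) (hi : Irreducible N)
    (hnorm : M * cstar M = dPoly (N ^ n))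
    (hg : IsMrpf2 g c (cstar Q * D))
    (hgR : IsMrpf2 gR c (D * cstar Q))
    (hgdvd : g ∣ gR)
    (hcg : RDvdQ (c * g) (D * cstar D)) :
    ∃ ML G₁ G₂ MR : DHq[X], M = ML * (G₁ * G₂) * MR ∧
      GenericD ML ∧ GenericD G₁ ∧ GenericD G₂ ∧ GenericD MR ∧
      primal (G₁ * G₂) = qPoly c := by
  have hPn : P * cstar P = qPoly (N ^ n) := by
    have := congrArg primal hnorm
    rwa [hM, primal_mul, primal_cstar, primal_mp, primal_dPoly] at this
  have hcN : c ∣ N ^ n := by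
    refine (dvd_of_qPoly hc.1.ne_zero (B := Q * cstar P) ?_).1
    rw [← hPn, ← mul_assoc, ← hPQ]
  obtain ⟨k, -, rfl⟩ := mon_pow hN hi hc.1 hcN
  obtain ⟨j, hjk, rfl⟩ := mon_pow hN hi hg.1 hg.2.1
  have hk1 : 1 ≤ k := by
    rcases k with _ | k
    · simp at hcdeg
    · omega
  have degpow : ∀ i, (N ^ i).natDegree = 2 * i := by
    intro i; rw [hN.natDegree_pow, hN2, mul_comm]
  have powle : ∀ a b : ℕ, N ^ a ∣ N ^ b → a ≤ b := by
    intro a b h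
    have := natDegree_le_of_dvd h (hN.pow b).ne_zero
    rw [degpow, degpow] at this; omega
  have hQP : qPoly (N ^ (2 * k)) * (Q * cstar Q) = qPoly (N ^ n) := by
    rw [← hPn, hPQ, cstar_mul, qPoly_star, two_mul, pow_add, qPoly_mul,
      mul_assoc (qPoly (N ^ k)) (qPoly (N ^ k)), mul_assoc (qPoly (N ^ k)) Q, ← mul_assoc Q,
      qPoly_comm (N ^ k) (Q * cstar Q)]
  obtain ⟨q, hq⟩ := nu_real Q
  have hkn : 2 * k ≤ n := by
    apply powle
    exact (dvd_of_qPoly (hN.pow _).ne_zero hQP.symm).1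
  have hQn : Q * cstar Q = qPoly (N ^ (n - 2 * k)) := by
    apply mul_left_cancel₀ (qPoly_ne (hN.pow (2 * k)).ne_zero)
    rw [hQP, ← qPoly_mul, ← pow_add]; congr 2; omega
  have hD : ¬ RDvdQ N D := by
    rintro ⟨B, hB⟩
    obtain ⟨k, rfl⟩ : ∃ k', k = k' + 1 := ⟨k - 1, by omega⟩
    have : N = 1 := by
      apply hred N hN
      refine ⟨mp (qPoly (N ^ k) * Q) B, ?_⟩
      rw [hM, dPoly, dhQ_eq_mp, mp_mul, hPQ, hB, pow_succ', qPoly_mul]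
      simp [mul_assoc]
    rw [this] at hN2; simp at hN2
  have hQ : ¬ RDvdQ N Q := by
    rintro ⟨B, hB⟩
    have := hc.2.2 (N ^ (k + 1)) (hN.pow _) ⟨B, by rw [hPQ, hB, pow_succ, qPoly_mul, mul_assoc]⟩
    have := powle _ _ this
    omega
  rw [← pow_add] at hcg
  rw [hM, hPQ] at hmonic hnorm ⊢
  by_cases hlast : RDvdQ (N ^ (j + 1)) (cstar Q * D)
  · have hjk' : j = k := by
      by_contra hne
      have := powle _ _ (hg.2.2.2 (N ^ (j + 1)) (hN.pow _) (pow_dvd_pow N (by omega)) hlast)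
      omega
    subst hjk'
    exact shift hN hi hN2 hmonic hk1 hkn hnorm hD hcg hQ hQn hg.2.2.1 (hgR.2.2.1.trans hgdvd) hlast
  · exact core hN hi hN2 hmonic hjk hkn hnorm hD hcg hg.2.2.1 hlast

end helpers
/-- Correctness of Algorithm `Factor3`: the three-part factorization `M = M_L·M_C·M_R`
with generic `M_L`, `M_R` and translational `M_C` a product of two generic motion
polynomials. -/
theorem factor3_exists
    (n : ℕ) (hn : 1 ≤ n) (P D : Hq[X]) (c : ℝ[X]) (Q : Hq[X]) (N g gR : ℝ[X])
    (M : DHq[X]) (hM : M = mp P D)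
    (hmonic : M.Monic) (hmotion : IsMotion M)
    (hred : ReducedD M) (hbdd : BoundedD M)
    (hdeg : M.natDegree = n)
    (hc : IsMrpfQ c P) (hPQ : P = qPoly c * Q) (hcdeg : 0 < c.natDegree)
    (hN2 : N.natDegree = 2) (hNirr : Irreducible N)
    (hnorm : M * cstar M = dPoly (N ^ n))
    (hg : IsMrpf2 g c (cstar Q * D))
    (hgR : IsMrpf2 gR c (D * cstar Q))
    (hgdvd : g ∣ gR)
    (hcg : RDvdQ (c * g) (D * cstar D)) :
    ∃ ML MC MR : DHq[X],
      ML.Monic ∧ MC.Monic ∧ MR.Monic ∧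
      IsMotion ML ∧ IsMotion MC ∧ IsMotion MR ∧
      M = ML * MC * MR ∧ GenericD ML ∧ GenericD MR ∧
      (∃ D' : Hq[X], MC = mp (qPoly c) D') ∧
      (∃ G₁ G₂ : DHq[X], GenericD G₁ ∧ GenericD G₂ ∧ MC = G₁ * G₂) := by
  obtain ⟨N0, hN0, hN02, hN0i, hpow⟩ : ∃ N0 : ℝ[X], N0.Monic ∧ N0.natDegree = 2 ∧ Irreducible N0 ∧
      N ^ n = N0 ^ n := by
    have hl : N.leadingCoeff ≠ 0 := leadingCoeff_ne_zero.mpr hNirr.ne_zero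
    have hm0 : (N * C N.leadingCoeff⁻¹).Monic := monic_mul_leadingCoeff_inv hNirr.ne_zero
    have hu : IsUnit (C N.leadingCoeff⁻¹ : ℝ[X]) := isUnit_C.mpr (isUnit_iff_ne_zero.mpr (inv_ne_zero hl))
    refine ⟨N * C N.leadingCoeff⁻¹, hm0, ?_, ?_, ?_⟩
    · rw [natDegree_mul_leadingCoeff_inv _ hNirr.ne_zero, hN2]
    · exact (irreducible_mul_isUnit hu).2 hNirr
    · have hmm : (N ^ n).Monic := by
        have h1 : (dPoly (N ^ n)).Monic := hnorm ▸ hmonic.mul (cstar_monic hmonic)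
        have h2 := primal_monic h1
        rw [primal_dPoly, qPoly] at h2
        exact Polynomial.monic_of_injective (algebraMap ℝ Hq).injective h2
      have : N.leadingCoeff ^ n = 1 := by rw [← leadingCoeff_pow]; exact hmm
      rw [mul_pow, ← C_pow, inv_pow, this]; simp
  rw [hpow] at hnorm
  obtain ⟨ML, G₁, G₂, MR, e, g1, g2, g3, g4, hp⟩ := factor3_aux n P D c Q N0 g gR M hM hmonic hred hc
    hPQ hcdeg hN0 hN02 hN0i hnorm hg hgR hgdvd hcg
  refine ⟨ML, G₁ * G₂, MR, g1.1, g2.1.mul g3.1, g4.1, g1.2.1, g2.2.1.mul g3.2.1, g4.2.1, e, g1, g4,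
    ⟨dualp (G₁ * G₂), ?_⟩, G₁, G₂, g2, g3, rfl⟩
  rw [← hp, mp_eta]
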